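/- There exist a constant C > 0 and x₀ ≥ 1 such that for all real x ≥ x₀, |M(x) − (π²/4)·x − x^{1/2}·Q(√x)| ≤ C·x^{1/4}, where M(x) = Σ_{m ∈ ℕ, m ≤ √x} r₂(m)·(x − m²)^{1/2} and Q(√x) = x^{−1/2}·(S(√x; 0) − (2^{3/2}π/3)·x). -/

import Mathlib

open Real

/-- `r₂(m)`: the number of representations of `m` as a sum of two squares of integers. -/
noncomputable def r2 (m : ℕ) : ℕ :=
  Set.ncard {p : ℤ × ℤ | p.1 ^ 2 + p.2 ^ 2 = (m : ℤ)}

/-- `M(x) = Σ_{m ∈ ℕ, m ≤ √x} r₂(m)·(x − m²)^{1/2}`. -/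
noncomputable def M (x : ℝ) : ℝ :=
  ∑ m ∈ Finset.range (⌊Real.sqrt x⌋₊ + 1),
    (r2 m : ℝ) * (x - (m : ℝ) ^ 2) ^ ((1 : ℝ) / 2)

/-- `S(√x; 0) = √2·x^{1/4}·Σ_{m ∈ ℕ, m ≤ √x} r₂(m)·(√x − m)^{1/2}`. -/
noncomputable def Sx0 (x : ℝ) : ℝ :=
  Real.sqrt 2 * x ^ ((1 : ℝ) / 4) *
    ∑ m ∈ Finset.range (⌊Real.sqrt x⌋₊ + 1),
      (r2 m : ℝ) * (Real.sqrt x - m) ^ ((1 : ℝ) / 2)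

/-- `Q(√x) = x^{−1/2}·(S(√x; 0) − (2^{3/2}π/3)·x)`. -/
noncomputable def Q (x : ℝ) : ℝ :=
  x ^ (-(1 : ℝ) / 2) * (Sx0 x - 2 ^ ((3 : ℝ) / 2) * Real.pi / 3 * x)

/-!
Since `x - m² = (√x - m)(√x + m)`, the difference `M x - Sx0 x` is `√2 √x` times the weighted sum
`∑ r₂(m) φ(1 - m / √x)` over `m ≤ √x`, where
`φ(s) = √s (√(1 - s / 2) - 1) = ∑ₖ dₖ s ^ (k + 3 / 2)`. The weighted sum is thus a combination of
the Riesz means of `r₂` of orders `k + 3 / 2`, with main term `π √x ∫ φ`.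

The mean of order `3 / 2` at `z` is the sum of the Bochner–Riesz kernel of radius `R = √z` over
`ℤ²`. The Fourier transform of that kernel at `w ≠ 0` is at most `R² / ‖w‖³`, which is summable
over `ℤ²`, so by Poisson summation the mean is `(2π / 5) z ^ (5 / 2) + O(z)`. Integrating in `z`
raises the order by one and multiplies the constant in the error term by at most `5 / 4`; as the
series for `φ` converges for `|s| < 2`, the errors can be summed over all `k`.
-/

open Set Filter MeasureTheory
open scoped FourierTransform

section Poisson

lemma tsum_int_eq_tsum_fourier_of_hasCompactSupport {f : ℝ → ℂ} (hf : Continuous f)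
    (hf' : HasCompactSupport f) (hsum : Summable fun n : ℤ ↦ 𝓕 f n) :
    ∑' n : ℤ, f n = ∑' n : ℤ, 𝓕 f n := by
  have hO : f =O[cocompact ℝ] fun x ↦ |x| ^ (-2 : ℝ) := by
    rw [hasCompactSupport_iff_eventuallyEq, coclosedCompact_eq_cocompact] at hf'
    exact hf'.trans_isBigO (Asymptotics.isBigO_zero _ _)
  simpa using Real.tsum_eq_tsum_fourier_of_rpow_decay_of_summable hf one_lt_two hO hsum 0

lemma fourier_complex_mk {E : Type*} [NormedAddCommGroup E] [NormedSpace ℂ E] {f : ℂ → E}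
    (hf : Integrable f) (k l : ℝ) :
    𝓕 f ⟨k, l⟩ = 𝓕 (fun b : ℝ ↦ 𝓕 (fun a : ℝ ↦ f ⟨a, b⟩) k) l := by
  have hmp := Complex.volume_preserving_equiv_real_prod.symm
  have hint := (Real.fourierIntegral_convergent_iff (⟨k, l⟩ : ℂ)).2 hf
  rw [← hmp.integrable_comp_emb
    Complex.measurableEquivRealProd.symm.measurableEmbedding,
    Function.comp_def] at hint
  rw [Real.fourier_eq, ← hmp.integral_comp
    Complex.measurableEquivRealProd.symm.measurableEmbedding, Measure.volume_eq_prod,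
    integral_prod_symm _ hint, Real.fourier_real_eq]
  congr with b
  rw [Real.fourier_real_eq, Circle.smul_def, ← integral_smul]
  congr with a
  rw [Complex.measurableEquivRealProd_symm_apply, ← Circle.smul_def, smul_smul,
    ← AddChar.map_add_eq_mul, Complex.inner]
  congr 3
  simp only [Complex.mul_re, Complex.conj_re, Complex.conj_im]
  ring

section Slice

variable {X Y E : Type*} [TopologicalSpace X] [TopologicalSpace Y] [Zero E] {F : X × Y → E}

lemma eq_zero_of_notMem_fst_image_tsupport {a : X} (ha : a ∉ Prod.fst '' tsupport F) (b : Y) :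
    F (a, b) = 0 :=
  image_eq_zero_of_notMem_tsupport fun h ↦ ha ⟨_, h, rfl⟩

lemma eq_zero_of_notMem_snd_image_tsupport {b : Y} (hb : b ∉ Prod.snd '' tsupport F) (a : X) :
    F (a, b) = 0 :=
  image_eq_zero_of_notMem_tsupport fun h ↦ hb ⟨_, h, rfl⟩

lemma hasCompactSupport_slice [R1Space X] (hF : HasCompactSupport F) (b : Y) :
    HasCompactSupport fun a ↦ F (a, b) :=
  .intro (hF.isCompact.image continuous_fst) fun _ ha ↦ eq_zero_of_notMem_fst_image_tsupport ha b

end Slice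

section FourierSlice

variable {E : Type*} [NormedAddCommGroup E] [NormedSpace ℂ E] {F : ℝ × ℝ → E}

lemma hasCompactSupport_fourier_slice (hF : HasCompactSupport F) (k : ℝ) :
    HasCompactSupport fun b ↦ 𝓕 (fun a ↦ F (a, b)) k :=
  .intro (hF.isCompact.image continuous_snd) fun b hb ↦ by
    simp [Real.fourier_real_eq, eq_zero_of_notMem_snd_image_tsupport hb]

lemma continuous_fourier_slice (hF : Continuous F) (hF' : HasCompactSupport F) (k : ℝ) :
    Continuous fun b ↦ 𝓕 (fun a ↦ F (a, b)) k := by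
  simp only [Real.fourier_real_eq_integral_exp_smul]
  rw [← continuousOn_univ]
  refine continuousOn_integral_of_compact_support (hF'.isCompact.image continuous_fst)
    (by fun_prop) fun b a _ ha ↦ ?_
  rw [eq_zero_of_notMem_fst_image_tsupport ha, smul_zero]

lemma fourier_sum_slice (hF : Continuous F) (hF' : HasCompactSupport F) (s : Finset ℤ) (k : ℝ) :
    𝓕 (fun a ↦ ∑ b ∈ s, F (a, b)) k = ∑ b ∈ s, 𝓕 (fun a ↦ F (a, b)) k := by
  simp only [Real.fourier_real_eq, Finset.smul_sum]
  refine integral_finsetSum _ fun b _ ↦ ?_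
  have hint : Integrable fun a ↦ F (a, b) :=
    (hF.comp (.prodMk_left _)).integrable_of_hasCompactSupport (hasCompactSupport_slice hF' b)
  simpa [mul_comm] using (Real.fourierIntegral_convergent_iff k).2 hint

end FourierSlice

lemma finite_support_comp_intCast {E : Type*} [Zero E] {F : ℝ × ℝ → E} (hF : HasCompactSupport F) :
    (Function.support fun n : ℤ × ℤ ↦ F (n.1, n.2)).Finite := by
  have hemb := Int.isClosedEmbedding_coe_real.prodMap Int.isClosedEmbedding_coe_real
  exact ((hemb.isCompact_preimage hF.isCompact).finite_of_discrete).subset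
    fun _ hn ↦ subset_tsupport F hn

lemma tsum_int_prod_eq_tsum_fourier_fourier {F : ℝ × ℝ → ℂ} (hF : Continuous F)
    (hF' : HasCompactSupport F)
    (hsum : Summable fun n : ℤ × ℤ ↦ 𝓕 (fun b ↦ 𝓕 (fun a ↦ F (a, b)) n.1) n.2) :
    ∑' n : ℤ × ℤ, F (n.1, n.2) =
      ∑' n : ℤ × ℤ, 𝓕 (fun b ↦ 𝓕 (fun a ↦ F (a, b)) n.1) n.2 := by
  have hfin : ((↑) ⁻¹' (Prod.snd '' tsupport F) : Set ℤ).Finite :=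
    (Int.isClosedEmbedding_coe_real.isCompact_preimage
      (hF'.isCompact.image continuous_snd)).finite_of_discrete
  set s : Finset ℤ := hfin.toFinset
  have hzero : ∀ b : ℤ, b ∉ s → ∀ a, F (a, b) = 0 := fun b hb ↦
    eq_zero_of_notMem_snd_image_tsupport fun h ↦ hb (hfin.mem_toFinset.2 h)
  have hcol (k : ℤ) : 𝓕 (fun a ↦ ∑ b ∈ s, F (a, b)) k =
      ∑' l : ℤ, 𝓕 (fun b ↦ 𝓕 (fun a ↦ F (a, b)) k) l := by
    rw [fourier_sum_slice hF hF', ← tsum_int_eq_tsum_fourier_of_hasCompactSupport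
      (continuous_fourier_slice hF hF' k) (hasCompactSupport_fourier_slice hF' k)
      (hsum.prod_factor k)]
    exact (tsum_eq_sum fun b hb ↦ by simp [Real.fourier_real_eq, hzero b hb]).symm
  calc ∑' n : ℤ × ℤ, F (n.1, n.2) = ∑' a : ℤ, ∑' b : ℤ, F (a, b) :=
        (summable_of_hasFiniteSupport (finite_support_comp_intCast hF')).tsum_prod
    _ = ∑' a : ℤ, ∑ b ∈ s, F (a, b) := tsum_congr fun a ↦ tsum_eq_sum fun b hb ↦ hzero b hb a
    _ = ∑' k : ℤ, 𝓕 (fun a ↦ ∑ b ∈ s, F (a, b)) k := by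
        refine tsum_int_eq_tsum_fourier_of_hasCompactSupport
          (f := fun a ↦ ∑ b ∈ s, F (a, b)) (by fun_prop) ?_ ?_
        · exact .intro (hF'.isCompact.image continuous_fst) fun a ha ↦
            Finset.sum_eq_zero fun b _ ↦ eq_zero_of_notMem_fst_image_tsupport ha b
        · simpa only [hcol] using hsum.prod
    _ = ∑' n : ℤ × ℤ, 𝓕 (fun b ↦ 𝓕 (fun a ↦ F (a, b)) n.1) n.2 := by
        simp only [hcol]
        exact hsum.tsum_prod.symm

lemma tsum_int_prod_eq_tsum_fourier {f : ℂ → ℂ} (hf : Continuous f) (hf' : HasCompactSupport f)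
    (hsum : Summable fun n : ℤ × ℤ ↦ 𝓕 f ⟨n.1, n.2⟩) :
    ∑' n : ℤ × ℤ, f ⟨n.1, n.2⟩ = ∑' n : ℤ × ℤ, 𝓕 f ⟨n.1, n.2⟩ := by
  have hint : Integrable f := hf.integrable_of_hasCompactSupport hf'
  simp only [fourier_complex_mk hint] at hsum ⊢
  exact tsum_int_prod_eq_tsum_fourier_fourier
    (F := f ∘ Complex.equivRealProdCLM.symm) (hf.comp (map_continuous _))
    (hf'.comp_homeomorph Complex.equivRealProdCLM.symm.toHomeomorph) hsum

lemma fourier_eq_of_norm_eq {V E : Type*} [NormedAddCommGroup V] [InnerProductSpace ℝ V]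
    [FiniteDimensional ℝ V] [MeasurableSpace V] [BorelSpace V] [NormedAddCommGroup E]
    [NormedSpace ℂ E] {f : V → E} (hf : ∀ v w, ‖v‖ = ‖w‖ → f v = f w) {v w : V}
    (h : ‖v‖ = ‖w‖) : 𝓕 f v = 𝓕 f w := by
  set A := (ℝ ∙ (v - w))ᗮ.reflection
  have hA : f ∘ A = f := funext fun x ↦ hf _ _ (A.norm_map x)
  rw [← Submodule.reflection_sub h, ← Real.fourier_comp_linearIsometry, hA]

end Poisson

section BochnerRiesz

lemma integral_max_sub_sq_rpow_three_halves (s : ℝ) :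
    ∫ b : ℝ, (max (s - b ^ 2) 0) ^ (3 / 2 : ℝ) = 3 * π / 8 * (max s 0) ^ 2 := by
  have hzero {b : ℝ} (hb : s ≤ b ^ 2) : (max (s - b ^ 2) 0) ^ (3 / 2 : ℝ) = 0 := by
    rw [max_eq_right (by linarith), Real.zero_rpow (by norm_num)]
  rcases le_or_gt s 0 with hs | hs
  · simp [fun b : ℝ ↦ hzero (hs.trans (sq_nonneg b)), max_eq_right hs]
  have hsubst : ∀ θ ∈ uIcc (-(π / 2)) (π / 2),
      (max (s - (√s * sin θ) ^ 2) 0) ^ (3 / 2 : ℝ) * (√s * cos θ) = s ^ 2 * cos θ ^ 4 := by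
    intro θ hθ
    rw [uIcc_of_le (by linarith [pi_pos])] at hθ
    have hcos : 0 ≤ √s * cos θ := mul_nonneg (sqrt_nonneg s) (cos_nonneg_of_mem_Icc hθ)
    have hsq : s - (√s * sin θ) ^ 2 = (√s * cos θ) ^ 2 := by
      rw [mul_pow, mul_pow, sq_sqrt hs.le, cos_sq']; ring
    have hpow : ((√s * cos θ) ^ 2) ^ (3 / 2 : ℝ) = (√s * cos θ) ^ 3 := by
      rw [← Real.rpow_natCast_mul hcos, ← Real.rpow_natCast]; norm_num
    rw [hsq, max_eq_left (sq_nonneg _), hpow, ← pow_succ, mul_pow,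
      show √s ^ (3 + 1) = (√s ^ 2) ^ 2 by ring, sq_sqrt hs.le]
  calc ∫ b : ℝ, (max (s - b ^ 2) 0) ^ (3 / 2 : ℝ)
      = ∫ b in (-√s)..√s, (max (s - b ^ 2) 0) ^ (3 / 2 : ℝ) := by
        rw [intervalIntegral.integral_of_le (by linarith [sqrt_nonneg s]),
          setIntegral_eq_integral_of_forall_compl_eq_zero]
        exact fun b hb ↦ hzero <| le_of_not_gt fun h ↦
          hb ((abs_lt.1 (Real.lt_sqrt_of_sq_lt (by rwa [sq_abs]))).imp_right le_of_lt)
    _ = ∫ θ in (-(π / 2))..(π / 2),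
          (max (s - (√s * sin θ) ^ 2) 0) ^ (3 / 2 : ℝ) * (√s * cos θ) := by
        simpa using (intervalIntegral.integral_comp_mul_deriv (a := -(π / 2)) (b := π / 2)
          (f := fun θ ↦ √s * sin θ) (g := fun b ↦ (max (s - b ^ 2) 0) ^ (3 / 2 : ℝ))
          (fun θ _ ↦ (hasDerivAt_sin θ).const_mul _) (by fun_prop)
          (.rpow_const (by fun_prop) fun _ ↦ .inr (by norm_num))).symm
    _ = s ^ 2 * ∫ θ in (-(π / 2))..(π / 2), cos θ ^ 4 := by
        rw [intervalIntegral.integral_congr hsubst, intervalIntegral.integral_const_mul]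
    _ = 3 * π / 8 * (max s 0) ^ 2 := by
        have hcos4 := @integral_cos_pow (-(π / 2)) (π / 2) 2
        norm_num [integral_cos_sq] at hcos4
        rw [hcos4, max_eq_left hs.le]
        ring

lemma intervalIntegral_cexp_mul {w : ℂ} (hw : w ≠ 0) {u u' : ℝ → ℂ}
    (hu : ∀ t, HasDerivAt u (u' t) t) (hu' : Continuous u') (a b : ℝ) :
    ∫ t in a..b, Complex.exp (w * t) * u t =
      (Complex.exp (w * b) * u b - Complex.exp (w * a) * u a) / w -
        (∫ t in a..b, Complex.exp (w * t) * u' t) / w := by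
  have hexp (t : ℝ) : HasDerivAt (fun t : ℝ ↦ Complex.exp (w * t) / w) (Complex.exp (w * t)) t := by
    have := (((hasDerivAt_id (t : ℂ)).const_mul w).cexp.div_const w).comp_ofReal
    simpa [hw] using this
  have hparts := intervalIntegral.integral_mul_deriv_eq_deriv_mul (a := a) (b := b)
    (fun t _ ↦ hu t) (fun t _ ↦ hexp t) (hu'.intervalIntegrable _ _)
    (Continuous.intervalIntegrable (by fun_prop) _ _)
  simp only [mul_comm _ (Complex.exp _), mul_comm (u' _), mul_comm (u _), div_mul_eq_mul_div,
    intervalIntegral.integral_div] at hparts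
  rw [hparts]
  ring

lemma intervalIntegral_cexp_mul_sq_sub_sq_sq {w : ℂ} (hw : w ≠ 0) (R : ℝ) :
    ∫ t in (-R)..R, Complex.exp (w * t) * ((R : ℂ) ^ 2 - t ^ 2) ^ 2 =
      ((Complex.exp (w * R) - Complex.exp (w * (-R : ℝ))) * (8 * R ^ 2) -
        ∫ t in (-R)..R, Complex.exp (w * t) * (24 * (t : ℂ))) / w ^ 3 := by
  have hd₀ (t : ℝ) : HasDerivAt (fun t : ℝ ↦ ((R : ℂ) ^ 2 - t ^ 2) ^ 2)
      (-4 * t * ((R : ℂ) ^ 2 - t ^ 2)) t := by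
    convert! (((hasDerivAt_pow 2 (t : ℂ)).const_sub ((R : ℂ) ^ 2)).pow 2).comp_ofReal using 1
    push_cast
    ring
  have hd₁ (t : ℝ) : HasDerivAt (fun t : ℝ ↦ -4 * t * ((R : ℂ) ^ 2 - t ^ 2))
      (12 * (t : ℂ) ^ 2 - 4 * R ^ 2) t := by
    convert! (((hasDerivAt_id (t : ℂ)).const_mul (-4)).mul
      ((hasDerivAt_pow 2 (t : ℂ)).const_sub ((R : ℂ) ^ 2))).comp_ofReal using 1
    simp only [id_eq, Nat.cast_ofNat, Nat.add_one_sub_one, pow_one]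
    ring
  have hd₂ (t : ℝ) : HasDerivAt (fun t : ℝ ↦ 12 * (t : ℂ) ^ 2 - 4 * R ^ 2) (24 * (t : ℂ)) t := by
    convert! (((hasDerivAt_pow 2 (t : ℂ)).const_mul 12).sub_const _).comp_ofReal using 1
    push_cast
    ring
  rw [intervalIntegral_cexp_mul hw hd₀ (by fun_prop),
    intervalIntegral_cexp_mul hw hd₁ (by fun_prop),
    intervalIntegral_cexp_mul hw hd₂ (by fun_prop)]
  push_cast
  field_simp
  ring_nf

lemma norm_integral_cexp_mul_sq_sub_sq_sq_le {R l : ℝ} (hR : 0 ≤ R) (hl : l ≠ 0) :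
    ‖∫ t in (-R)..R, Complex.exp (l * Complex.I * t) * ((R : ℂ) ^ 2 - t ^ 2) ^ 2‖ ≤
      64 * R ^ 2 / |l| ^ 3 := by
  set w : ℂ := l * Complex.I
  have hw : w ≠ 0 := by simp [w, hl]
  have hwnorm : ‖w‖ = |l| := by simp [w]
  have hexp (t : ℝ) : ‖Complex.exp (w * t)‖ = 1 := by
    rw [show w * t = ((l * t : ℝ) : ℂ) * Complex.I by simp only [w]; push_cast; ring,
      Complex.norm_exp_ofReal_mul_I]
  have hboundary :
      ‖(Complex.exp (w * R) - Complex.exp (w * (-R : ℝ))) * (8 * R ^ 2)‖ ≤ 16 * R ^ 2 := by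
    have hsub := norm_sub_le (Complex.exp (w * R)) (Complex.exp (w * (-R : ℝ)))
    rw [hexp, hexp] at hsub
    calc _ = ‖Complex.exp (w * R) - Complex.exp (w * (-R : ℝ))‖ * (8 * R ^ 2) := by simp
      _ ≤ (1 + 1) * (8 * R ^ 2) := by gcongr
      _ = 16 * R ^ 2 := by ring
  have hlast : ‖∫ t in (-R)..R, Complex.exp (w * t) * (24 * (t : ℂ))‖ ≤ 24 * R * |R - -R| := by
    refine intervalIntegral.norm_integral_le_of_norm_le_const fun t ht ↦ ?_
    rw [uIoc_of_le (by linarith)] at ht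
    simpa [hexp] using abs_le.2 ⟨ht.1.le, ht.2⟩
  rw [abs_of_nonneg (by linarith)] at hlast
  rw [intervalIntegral_cexp_mul_sq_sub_sq_sq hw, norm_div, norm_pow, hwnorm]
  gcongr
  linarith [(norm_sub_le _ _).trans (add_le_add hboundary hlast)]

/-- The Bochner–Riesz kernel `(R² - ‖z‖²)₊ ^ (3 / 2)` of order `3 / 2` on the plane. The
plane is `ℂ`, a Euclidean space, and the values are complex so that `𝓕` applies. -/
noncomputable def bochnerRiesz (R : ℝ) (z : ℂ) : ℂ :=
  ((max (R ^ 2 - ‖z‖ ^ 2) 0 ^ (3 / 2 : ℝ) : ℝ) : ℂ)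

lemma continuous_bochnerRiesz (R : ℝ) : Continuous (bochnerRiesz R) :=
  Complex.continuous_ofReal.comp <| .rpow_const (by fun_prop) fun _ ↦ .inr (by norm_num)

lemma hasCompactSupport_bochnerRiesz (R : ℝ) : HasCompactSupport (bochnerRiesz R) := by
  refine .intro (isCompact_closedBall 0 |R|) fun z hz ↦ ?_
  rw [mem_closedBall_zero_iff, not_le] at hz
  have hRz : R ^ 2 ≤ ‖z‖ ^ 2 := sq_le_sq.2 (by simpa using hz.le)
  rw [bochnerRiesz, max_eq_right (by linarith), Real.zero_rpow (by norm_num), Complex.ofReal_zero]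

lemma fourier_bochnerRiesz_imaginary {R : ℝ} (hR : 0 ≤ R) (r : ℝ) :
    𝓕 (bochnerRiesz R) ⟨0, r⟩ = (3 * π / 8 : ℝ) * ∫ b in (-R)..R,
      Complex.exp (((-2 * π * r : ℝ) : ℂ) * Complex.I * b) * ((R : ℂ) ^ 2 - b ^ 2) ^ 2 := by
  have hmarginal (b : ℝ) : 𝓕 (fun a : ℝ ↦ bochnerRiesz R ⟨a, b⟩) 0 =
      ((3 * π / 8 * max (R ^ 2 - b ^ 2) 0 ^ 2 : ℝ) : ℂ) := by
    rw [Real.fourier_real_eq, ← integral_max_sub_sq_rpow_three_halves, ← integral_complex_ofReal]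
    congr with a
    simp only [bochnerRiesz, Complex.sq_norm, Complex.normSq_mk, mul_zero, neg_zero,
      AddChar.map_zero_eq_one, one_smul]
    ring_nf
  rw [fourier_complex_mk ((continuous_bochnerRiesz R).integrable_of_hasCompactSupport
    (hasCompactSupport_bochnerRiesz R)), Real.fourier_real_eq_integral_exp_smul]
  simp only [hmarginal]
  rw [← setIntegral_eq_integral_of_forall_compl_eq_zero (s := Ioc (-R) R),
    ← intervalIntegral.integral_of_le (by linarith), ← intervalIntegral.integral_const_mul]
  · refine intervalIntegral.integral_congr fun b hb ↦ ?_
    rw [uIcc_of_le (by linarith)] at hb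
    simp only [smul_eq_mul]
    rw [max_eq_left (sub_nonneg.2 (sq_le_sq' hb.1 hb.2))]
    push_cast
    ring_nf
  · intro b hb
    have hRb : R ^ 2 ≤ b ^ 2 := le_of_not_gt fun h ↦
      hb ((abs_lt.1 (abs_lt_of_sq_lt_sq h hR)).imp_right le_of_lt)
    simp [max_eq_right (sub_nonpos.2 hRb)]

lemma fourier_bochnerRiesz_zero {R : ℝ} (hR : 0 ≤ R) :
    𝓕 (bochnerRiesz R) 0 = ((2 * π / 5 * R ^ 5 : ℝ) : ℂ) := by
  have hint : ∫ b in (-R)..R, (R ^ 2 - b ^ 2) ^ 2 = 16 / 15 * R ^ 5 := by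
    have hexpand (b : ℝ) : (R ^ 2 - b ^ 2) ^ 2 = R ^ 4 - 2 * R ^ 2 * b ^ 2 + b ^ 4 := by ring
    simp only [hexpand]
    rw [intervalIntegral.integral_add (Continuous.intervalIntegrable (by fun_prop) _ _)
      (Continuous.intervalIntegrable (by fun_prop) _ _),
      intervalIntegral.integral_sub (Continuous.intervalIntegrable (by fun_prop) _ _)
      (Continuous.intervalIntegrable (by fun_prop) _ _)]
    simp only [intervalIntegral.integral_const, smul_eq_mul, intervalIntegral.integral_const_mul,
      integral_pow]
    push_cast
    ring
  have hcast : ∫ b in (-R)..R, ((R : ℂ) ^ 2 - b ^ 2) ^ 2 =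
      ((∫ b in (-R)..R, (R ^ 2 - b ^ 2) ^ 2 : ℝ) : ℂ) := by
    rw [← intervalIntegral.integral_ofReal]
    push_cast
    rfl
  change 𝓕 (bochnerRiesz R) ⟨0, 0⟩ = _
  rw [fourier_bochnerRiesz_imaginary hR]
  simp only [mul_zero, Complex.ofReal_zero, zero_mul, Complex.exp_zero, one_mul, hcast, hint,
    ← Complex.ofReal_mul]
  ring_nf

lemma norm_fourier_bochnerRiesz_le {R : ℝ} (hR : 0 ≤ R) {w : ℂ} (hw : w ≠ 0) :
    ‖𝓕 (bochnerRiesz R) w‖ ≤ R ^ 2 / ‖w‖ ^ 3 := by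
  have : 0 < ‖w‖ := norm_pos_iff.2 hw
  have hrot : 𝓕 (bochnerRiesz R) w = 𝓕 (bochnerRiesz R) ⟨0, ‖w‖⟩ := by
    refine fourier_eq_of_norm_eq (fun v w hvw ↦ by rw [bochnerRiesz, hvw, bochnerRiesz]) ?_
    simp [Complex.norm_def, Complex.normSq_mk, ← sq]
  have hl : |-2 * π * ‖w‖| = 2 * π * ‖w‖ := by
    rw [neg_mul, neg_mul, abs_neg, abs_of_nonneg (by positivity)]
  calc ‖𝓕 (bochnerRiesz R) w‖
      ≤ 3 * π / 8 * (64 * R ^ 2 / |-2 * π * ‖w‖| ^ 3) := by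
        rw [hrot, fourier_bochnerRiesz_imaginary hR, norm_mul, Complex.norm_real,
          Real.norm_of_nonneg (by positivity)]
        gcongr
        exact norm_integral_cexp_mul_sq_sub_sq_sq_le hR (by positivity)
    _ = 3 / π ^ 2 * (R ^ 2 / ‖w‖ ^ 3) := by
        rw [hl]
        field_simp
        ring
    _ ≤ R ^ 2 / ‖w‖ ^ 3 := by
        refine mul_le_of_le_one_left (by positivity) ?_
        rw [div_le_one (by positivity)]
        nlinarith [pi_gt_three]

end BochnerRiesz

section LatticeSums

lemma summable_one_div_norm_complex_int_pow_three :
    Summable fun n : ℤ × ℤ ↦ 1 / ‖(⟨n.1, n.2⟩ : ℂ)‖ ^ 3 := by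
  have hsup : Summable fun n : ℤ × ℤ ↦ ‖n‖ ^ (-(3 : ℝ)) := by
    rw [← (finTwoArrowEquiv ℤ).summable_iff]
    convert EisensteinSeries.summable_one_div_norm_rpow (k := 3) (by norm_num) using 2 with x
    simp [EisensteinSeries.norm_eq_max_natAbs, Prod.norm_def, Int.norm_eq_abs]
  refine .of_nonneg_of_le (fun n ↦ by positivity) (fun n ↦ ?_) hsup
  rw [Real.rpow_neg (norm_nonneg _), ← one_div, Real.rpow_ofNat]
  rcases eq_or_ne n 0 with rfl | hn
  · simp [Complex.norm_def]
  have : 0 < ‖n‖ := norm_pos_iff.2 hn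
  gcongr
  exact max_le (Complex.abs_re_le_norm ⟨n.1, n.2⟩) (Complex.abs_im_le_norm ⟨n.1, n.2⟩)

lemma norm_tsum_bochnerRiesz_sub_le {R : ℝ} (hR : 0 ≤ R) :
    ‖∑' n : ℤ × ℤ, bochnerRiesz R ⟨n.1, n.2⟩ - (2 * π / 5 * R ^ 5 : ℝ)‖ ≤
      R ^ 2 * ∑' n : ℤ × ℤ, 1 / ‖(⟨n.1, n.2⟩ : ℂ)‖ ^ 3 := by
  set c : ℤ × ℤ → ℂ := fun n ↦ 𝓕 (bochnerRiesz R) ⟨n.1, n.2⟩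
  have hbound := (summable_one_div_norm_complex_int_pow_three.mul_left (R ^ 2)).hasSum
  rw [tsum_mul_left] at hbound
  have hc (n : ℤ × ℤ) :
      ‖Function.update c 0 0 n‖ ≤ R ^ 2 * (1 / ‖(⟨n.1, n.2⟩ : ℂ)‖ ^ 3) := by
    rcases eq_or_ne n 0 with rfl | hn
    · rw [Function.update_self, norm_zero]
      positivity
    rw [Function.update_of_ne hn, mul_one_div]
    refine norm_fourier_bochnerRiesz_le hR fun h ↦ hn ?_
    simpa [Complex.ext_iff, Prod.ext_iff] using h
  have hsum : Summable c := by
    simpa using (Summable.of_norm_bounded hbound.summable hc).update 0 (c 0)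
  have hc₀ : c 0 = (2 * π / 5 * R ^ 5 : ℝ) := by
    rw [← fourier_bochnerRiesz_zero hR]
    simp only [c, Prod.fst_zero, Prod.snd_zero, Int.cast_zero]
    rfl
  rw [tsum_int_prod_eq_tsum_fourier (continuous_bochnerRiesz R)
    (hasCompactSupport_bochnerRiesz R) hsum, ← hc₀]
  have := (hsum.hasSum.update 0 0).tsum_eq
  rw [show ∑' n, c n - c 0 = ∑' n, Function.update c 0 0 n by rw [this]; ring]
  exact tsum_of_norm_bounded hbound hc

lemma hasSum_r2_mul {φ : ℕ → ℝ}
    (hφ : Summable fun n : ℤ × ℤ ↦ φ (n.1 ^ 2 + n.2 ^ 2).natAbs) :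
    HasSum (fun m ↦ r2 m * φ m) (∑' n : ℤ × ℤ, φ (n.1 ^ 2 + n.2 ^ 2).natAbs) := by
  have hfiber (m : ℕ) : (fun n : ℤ × ℤ ↦ (n.1 ^ 2 + n.2 ^ 2).natAbs) ⁻¹' {m} =
      {n | n.1 ^ 2 + n.2 ^ 2 = (m : ℤ)} := by
    ext n
    have : 0 ≤ n.1 ^ 2 + n.2 ^ 2 := by positivity
    simp only [mem_preimage, mem_singleton_iff, mem_ofPred_eq]
    omega
  have hterm (m : ℕ) : r2 m * φ m =
      ∑' n : ↥((fun n : ℤ × ℤ ↦ (n.1 ^ 2 + n.2 ^ 2).natAbs) ⁻¹' {m}),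
        φ (n.1.1 ^ 2 + n.1.2 ^ 2).natAbs := by
    rw [tsum_congr fun n ↦ congrArg φ n.2, tsum_const, nsmul_eq_mul, hfiber]
    rfl
  simpa only [hterm] using hφ.hasSum.tsum_fiberwise fun n ↦ (n.1 ^ 2 + n.2 ^ 2).natAbs

end LatticeSums

section RieszMeans

lemma integral_max_sub_rpow {p : ℝ} (hp : 0 < p) {a m : ℝ} (ham : a ≤ m) (b : ℝ) :
    ∫ t in a..b, max (t - m) 0 ^ p = max (b - m) 0 ^ (p + 1) / (p + 1) := by
  have hzero {c : ℝ} (hc : c ≤ m) : ∫ t in a..c, max (t - m) 0 ^ p = 0 := by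
    refine intervalIntegral.integral_zero_ae (.of_forall fun t ht ↦ ?_)
    have htm : t ≤ m := ht.2.trans (max_le ham hc)
    rw [max_eq_right (by linarith), Real.zero_rpow hp.ne']
  rcases le_total b m with hbm | hmb
  · rw [hzero hbm, max_eq_right (by linarith), Real.zero_rpow (by linarith), zero_div]
  have hint (u v : ℝ) : IntervalIntegrable (fun t ↦ max (t - m) 0 ^ p) volume u v :=
    (Continuous.rpow_const (by fun_prop) fun _ ↦ .inr hp.le).intervalIntegrable u v
  calc ∫ t in a..b, max (t - m) 0 ^ p = ∫ t in m..b, max (t - m) 0 ^ p := by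
        rw [← intervalIntegral.integral_add_adjacent_intervals (hint a m) (hint m b),
          hzero le_rfl, zero_add]
    _ = ∫ t in m..b, (t - m) ^ p := by
        refine intervalIntegral.integral_congr fun t ht ↦ ?_
        rw [uIcc_of_le hmb] at ht
        simp only [max_eq_left (sub_nonneg.2 ht.1)]
    _ = max (b - m) 0 ^ (p + 1) / (p + 1) := by
        rw [intervalIntegral.integral_comp_sub_right (fun t ↦ t ^ p), sub_self,
          integral_rpow (.inl (by linarith)), Real.zero_rpow (by linarith), sub_zero,
          max_eq_left (sub_nonneg.2 hmb)]

/-- The Riesz mean `∑_{m ≤ z} c m (z - m) ^ p` of order `p` of the sequence `c`, without the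
customary normalising factor. It is meant for `0 ≤ z`, since `⌊z⌋₊ = 0` for negative `z`. -/
noncomputable def rieszMean (c : ℕ → ℝ) (p z : ℝ) : ℝ :=
  ∑ m ∈ Finset.range (⌊z⌋₊ + 1), c m * (z - m) ^ p

variable {c : ℕ → ℝ} {p q z A B : ℝ}

lemma natCast_le_of_mem_range_floor_add_one (hz : 0 ≤ z) {m : ℕ}
    (hm : m ∈ Finset.range (⌊z⌋₊ + 1)) : (m : ℝ) ≤ z :=
  (Nat.le_floor_iff hz).1 (Finset.mem_range_succ_iff.1 hm)

lemma rieszMean_eq_sum_max (hp : p ≠ 0) (hz : 0 ≤ z) {N : ℕ} (hN : z < N) :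
    rieszMean c p z = ∑ m ∈ Finset.range N, c m * max (z - m) 0 ^ p := by
  have hfloor : Finset.range (⌊z⌋₊ + 1) ⊆ Finset.range N :=
    Finset.range_mono ((Nat.floor_lt hz).2 hN)
  rw [← Finset.sum_subset hfloor]
  · refine Finset.sum_congr rfl fun m hm ↦ ?_
    rw [max_eq_left (sub_nonneg.2 (natCast_le_of_mem_range_floor_add_one hz hm))]
  · intro m _ hm
    have hzm : z < m := (Nat.floor_lt hz).1 (by simpa using hm)
    rw [max_eq_right (by linarith), Real.zero_rpow hp, mul_zero]

lemma continuousOn_rieszMean (hp : 0 < p) (z : ℝ) : ContinuousOn (rieszMean c p) (Icc 0 z) := by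
  obtain ⟨N, hN⟩ := exists_nat_gt z
  have hcont : Continuous fun t : ℝ ↦ ∑ m ∈ Finset.range N, c m * max (t - m) 0 ^ p :=
    continuous_finsetSum _ fun m _ ↦ continuous_const.mul <|
      .rpow_const (by fun_prop) fun _ ↦ .inr hp.le
  exact hcont.continuousOn.congr fun t ht ↦
    rieszMean_eq_sum_max hp.ne' ht.1 (ht.2.trans_lt hN)

lemma integral_rieszMean (hp : 0 < p) (hz : 0 ≤ z) :
    ∫ t in (0)..z, rieszMean c p t = rieszMean c (p + 1) z / (p + 1) := by
  obtain ⟨N, hN⟩ := exists_nat_gt z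
  have hmax : ∀ t ∈ uIcc 0 z,
      rieszMean c p t = ∑ m ∈ Finset.range N, c m * max (t - m) 0 ^ p := by
    intro t ht
    rw [uIcc_of_le hz] at ht
    exact rieszMean_eq_sum_max hp.ne' ht.1 (ht.2.trans_lt hN)
  rw [intervalIntegral.integral_congr hmax, rieszMean_eq_sum_max (by linarith) hz hN,
    intervalIntegral.integral_finsetSum, Finset.sum_div]
  · refine Finset.sum_congr rfl fun m _ ↦ ?_
    rw [intervalIntegral.integral_const_mul, integral_max_sub_rpow hp m.cast_nonneg, mul_div_assoc]
  · refine fun m _ ↦ Continuous.intervalIntegrable (continuous_const.mul ?_) _ _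
    exact .rpow_const (by fun_prop) fun _ ↦ .inr hp.le

lemma abs_rieszMean_add_one_sub_le (hp : 0 < p) (hq : 0 ≤ q)
    (h : ∀ t, 0 ≤ t → |rieszMean c p t - A * t ^ (p + 1) / (p + 1)| ≤ B * t ^ q) (hz : 0 ≤ z) :
    |rieszMean c (p + 1) z - A * z ^ (p + 1 + 1) / (p + 1 + 1)| ≤
      B * ((p + 1) / (q + 1)) * z ^ (q + 1) := by
  have hpow {r : ℝ} (hr : 0 ≤ r) : ∫ t in (0)..z, t ^ r = z ^ (r + 1) / (r + 1) := by
    rw [integral_rpow (.inl (by linarith)), Real.zero_rpow (by linarith), sub_zero]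
  have hcont {r : ℝ} (hr : 0 ≤ r) (a : ℝ) : Continuous fun t : ℝ ↦ a * t ^ r :=
    continuous_const.mul (Real.continuous_rpow_const hr)
  have hint : IntervalIntegrable (rieszMean c p) volume 0 z :=
    ContinuousOn.intervalIntegrable_of_Icc hz (continuousOn_rieszMean hp z)
  have hmain : ∫ t in (0)..z, (rieszMean c p t - A * t ^ (p + 1) / (p + 1)) =
      (rieszMean c (p + 1) z - A * z ^ (p + 1 + 1) / (p + 1 + 1)) / (p + 1) := by
    rw [intervalIntegral.integral_sub hint
      ((hcont (by linarith) A).div_const _ |>.intervalIntegrable _ _), integral_rieszMean hp hz,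
      intervalIntegral.integral_div, intervalIntegral.integral_const_mul, hpow (by linarith)]
    ring
  have hle : ‖∫ t in (0)..z, (rieszMean c p t - A * t ^ (p + 1) / (p + 1))‖ ≤
      ∫ t in (0)..z, B * t ^ q :=
    intervalIntegral.norm_integral_le_of_norm_le hz (.of_forall fun t ht ↦ h t ht.1.le)
      ((hcont hq B).intervalIntegrable _ _)
  rw [hmain, intervalIntegral.integral_const_mul, hpow hq, Real.norm_eq_abs, abs_div,
    abs_of_pos (by linarith : 0 < p + 1), div_le_iff₀ (by linarith)] at hle
  exact hle.trans_eq (by ring)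

lemma abs_rieszMean_add_natCast_sub_le (hp : 0 < p) (hq : 0 ≤ q) (hqp : q ≤ p)
    (h : ∀ t, 0 ≤ t → |rieszMean c p t - A * t ^ (p + 1) / (p + 1)| ≤ B * t ^ q)
    (k : ℕ) (hz : 0 ≤ z) :
    |rieszMean c (p + k) z - A * z ^ (p + k + 1) / (p + k + 1)| ≤
      B * ((p + 1) / (q + 1)) ^ k * z ^ (q + k) := by
  have hB : 0 ≤ B := by simpa using (abs_nonneg _).trans (h 1 zero_le_one)
  induction k generalizing z with
  | zero => simpa using h z hz
  | succ k ih =>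
    have hratio : (p + k + 1) / (q + k + 1) ≤ (p + 1) / (q + 1) := by
      rw [div_le_div_iff₀ (by positivity) (by positivity)]
      nlinarith [mul_nonneg (sub_nonneg.2 hqp) k.cast_nonneg]
    push_cast
    rw [← add_assoc, ← add_assoc]
    calc _ ≤ B * ((p + 1) / (q + 1)) ^ k * ((p + k + 1) / (q + k + 1)) * z ^ (q + k + 1) :=
          abs_rieszMean_add_one_sub_le (by positivity) (by positivity) (fun t ht ↦ ih ht) hz
      _ ≤ B * ((p + 1) / (q + 1)) ^ k * ((p + 1) / (q + 1)) * z ^ (q + k + 1) := by gcongr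
      _ = B * ((p + 1) / (q + 1)) ^ (k + 1) * z ^ (q + k + 1) := by ring

lemma hasSum_integral_of_hasSum_mul_rpow (hp : 0 ≤ p) {d : ℕ → ℝ} {φ : ℝ → ℝ}
    (hd : Summable fun k ↦ |d k|)
    (hφ : ∀ s ∈ Icc (0 : ℝ) 1, HasSum (fun k : ℕ ↦ d k * s ^ (p + k)) (φ s)) :
    HasSum (fun k : ℕ ↦ d k / (p + k + 1)) (∫ s in (0)..1, φ s) := by
  have hterm (k : ℕ) : ∫ s in (0 : ℝ)..1, d k * s ^ (p + k) = d k / (p + k + 1) := by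
    have : 0 ≤ p + k := by positivity
    rw [intervalIntegral.integral_const_mul, integral_rpow (.inl (by linarith)),
      Real.zero_rpow (by positivity), Real.one_rpow, sub_zero, mul_one_div]
  simp only [← hterm]
  refine intervalIntegral.hasSum_integral_of_dominated_convergence (fun k _ ↦ |d k|)
    (fun k ↦ ?_) (fun k ↦ .of_forall fun s hs ↦ ?_) (.of_forall fun _ _ ↦ hd)
    intervalIntegrable_const (.of_forall fun s hs ↦ ?_)
  · exact (continuous_const.mul
      (Real.continuous_rpow_const (by positivity))).aestronglyMeasurable
  all_goals rw [uIoc_of_le zero_le_one] at hs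
  · rw [norm_mul, Real.norm_eq_abs, Real.norm_of_nonneg (Real.rpow_nonneg hs.1.le _)]
    exact mul_le_of_le_one_right (abs_nonneg _)
      (Real.rpow_le_one hs.1.le hs.2 (by positivity))
  · exact hφ s (Ioc_subset_Icc_self hs)

lemma hasSum_mul_rieszMean {d : ℕ → ℝ} {φ : ℝ → ℝ}
    (hφ : ∀ s ∈ Icc (0 : ℝ) 1, HasSum (fun k : ℕ ↦ d k * s ^ (p + k)) (φ s)) (hz : 0 < z) :
    HasSum (fun k : ℕ ↦ d k * (rieszMean c (p + k) z / z ^ (p + k)))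
      (∑ m ∈ Finset.range (⌊z⌋₊ + 1), c m * φ (1 - m / z)) := by
  have hsum := hasSum_sum (s := Finset.range (⌊z⌋₊ + 1))
    (f := fun m k ↦ c m * (d k * (1 - m / z) ^ (p + k))) fun m hm ↦ (hφ (1 - m / z)
      ⟨sub_nonneg.2 (div_le_one_of_le₀ (natCast_le_of_mem_range_floor_add_one hz.le hm) hz.le),
        sub_le_self _ (by positivity)⟩).mul_left (c m)
  convert hsum using 2 with k
  rw [rieszMean, Finset.sum_div, Finset.mul_sum]
  refine Finset.sum_congr rfl fun m hm ↦ ?_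
  have hm := natCast_le_of_mem_range_floor_add_one hz.le hm
  rw [one_sub_div hz.ne', Real.div_rpow (sub_nonneg.2 hm) hz.le]
  ring

theorem abs_sum_mul_comp_one_sub_div_sub_le (hp : 0 < p) (hq : 0 ≤ q) (hqp : q ≤ p)
    (h : ∀ t, 0 ≤ t → |rieszMean c p t - A * t ^ (p + 1) / (p + 1)| ≤ B * t ^ q)
    {d : ℕ → ℝ} {φ : ℝ → ℝ} (hd : Summable fun k ↦ |d k| * ((p + 1) / (q + 1)) ^ k)
    (hφ : ∀ s ∈ Icc (0 : ℝ) 1, HasSum (fun k : ℕ ↦ d k * s ^ (p + k)) (φ s)) (hz : 0 < z) :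
    |∑ m ∈ Finset.range (⌊z⌋₊ + 1), c m * φ (1 - m / z) - A * z * ∫ s in (0)..1, φ s| ≤
      B * (∑' k, |d k| * ((p + 1) / (q + 1)) ^ k) * z ^ (q - p) := by
  have hd' : Summable fun k ↦ |d k| := by
    refine hd.of_nonneg_of_le (fun k ↦ abs_nonneg _) fun k ↦ ?_
    exact le_mul_of_one_le_right (abs_nonneg _)
      (one_le_pow₀ ((one_le_div (by positivity)).2 (by linarith)))
  have hdiff := (hasSum_mul_rieszMean (c := c) hφ hz).sub
    ((hasSum_integral_of_hasSum_mul_rpow hp.le hd' hφ).mul_left (A * z))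
  rw [← hdiff.tsum_eq, ← Real.norm_eq_abs]
  refine tsum_of_norm_bounded ((hd.hasSum.mul_left B).mul_right (z ^ (q - p))) fun k ↦ ?_
  have hpos : 0 < z ^ (p + k) := Real.rpow_pos_of_pos hz _
  calc ‖d k * (rieszMean c (p + k) z / z ^ (p + k)) - A * z * (d k / (p + k + 1))‖
      = |d k| * |rieszMean c (p + k) z - A * z ^ (p + k + 1) / (p + k + 1)| / z ^ (p + k) := by
        rw [Real.rpow_add_one hz.ne', Real.norm_eq_abs, ← abs_mul, ← abs_of_pos hpos, ← abs_div,
          abs_of_pos hpos]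
        congr 1
        field_simp
    _ ≤ |d k| * (B * ((p + 1) / (q + 1)) ^ k * z ^ (q + k)) / z ^ (p + k) := by
        gcongr
        exact abs_rieszMean_add_natCast_sub_le hp hq hqp h k hz.le
    _ = B * (|d k| * ((p + 1) / (q + 1)) ^ k) * z ^ (q - p) := by
        rw [show q - p = q + k - (p + k) by ring, Real.rpow_sub hz]
        ring

end RieszMeans

section TwoSquares

lemma tsum_bochnerRiesz_sqrt_eq_rieszMean {z : ℝ} (hz : 0 ≤ z) :
    ∑' n : ℤ × ℤ, bochnerRiesz √z ⟨n.1, n.2⟩ = (rieszMean (fun m ↦ r2 m) (3 / 2) z : ℝ) := by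
  obtain ⟨N, hN⟩ := exists_nat_gt z
  set φ : ℕ → ℝ := fun m ↦ max (z - m) 0 ^ (3 / 2 : ℝ)
  have hφ (n : ℤ × ℤ) :
      bochnerRiesz √z ⟨n.1, n.2⟩ = ((φ (n.1 ^ 2 + n.2 ^ 2).natAbs : ℝ) : ℂ) := by
    have : 0 ≤ n.1 ^ 2 + n.2 ^ 2 := by positivity
    simp only [bochnerRiesz, φ, sq_sqrt hz, Complex.sq_norm, Complex.normSq_mk, Nat.cast_natAbs,
      abs_of_nonneg this]
    push_cast
    simp only [sq]
  have hsum : Summable fun n : ℤ × ℤ ↦ φ (n.1 ^ 2 + n.2 ^ 2).natAbs := by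
    rw [← Complex.summable_ofReal]
    simp only [← hφ]
    exact summable_of_hasFiniteSupport <| finite_support_comp_intCast <|
      (hasCompactSupport_bochnerRiesz √z).comp_homeomorph Complex.equivRealProdCLM.symm.toHomeomorph
  have hmean : HasSum (fun m ↦ r2 m * φ m) (rieszMean (fun m ↦ r2 m) (3 / 2) z) := by
    rw [rieszMean_eq_sum_max (by norm_num) hz hN]
    refine hasSum_sum_of_ne_finset_zero fun m hm ↦ ?_
    have hNm : (N : ℝ) ≤ m := by simpa using hm
    simp only [φ]
    rw [max_eq_right (by linarith), Real.zero_rpow (by norm_num), mul_zero]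
  simp only [hφ]
  rw [← Complex.ofReal_tsum, (hasSum_r2_mul hsum).unique hmean]

lemma abs_rieszMean_r2_sub_le {z : ℝ} (hz : 0 ≤ z) :
    |rieszMean (fun m ↦ r2 m) (3 / 2) z - π * z ^ ((3 / 2 : ℝ) + 1) / (3 / 2 + 1)| ≤
      (∑' n : ℤ × ℤ, 1 / ‖(⟨n.1, n.2⟩ : ℂ)‖ ^ 3) * z ^ (1 : ℝ) := by
  have hmain : 2 * π / 5 * √z ^ 5 = π * z ^ ((3 / 2 : ℝ) + 1) / (3 / 2 + 1) := by
    rw [Real.sqrt_eq_rpow, ← Real.rpow_mul_natCast hz]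
    norm_num
    ring
  have h := norm_tsum_bochnerRiesz_sub_le (sqrt_nonneg z)
  rw [tsum_bochnerRiesz_sqrt_eq_rieszMean hz, hmain, ← Complex.ofReal_sub, Complex.norm_real,
    Real.norm_eq_abs, sq_sqrt hz, mul_comm z] at h
  rwa [Real.rpow_one]

end TwoSquares

section DiffWeight

lemma hasSum_choose_mul_pow (a : ℝ) {t : ℝ} (ht : |t| < 1) :
    HasSum (fun n : ℕ ↦ Ring.choose a n * t ^ n) ((1 + t) ^ a) := by
  have h := (Real.one_add_rpow_hasFPowerSeriesOnBall_zero (a := a)).hasSum (y := t)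
    (by simpa [← ofReal_norm] using ht)
  simpa [binomialSeries, mul_comm] using h

/-- The weight `φ` through which the sum defining `M` differs from the one defining `Sx0`: with
`s = 1 - m / √x` one has `√(x - m²) - √2 x^(1/4) √(√x - m) = √2 √x φ(s)`. -/
noncomputable def diffWeight (s : ℝ) : ℝ := √s * (√(1 - s / 2) - 1)

/-- The coefficient of `s ^ (3 / 2 + k)` in the expansion of `diffWeight s`, taken from the
binomial series of `√(1 - s / 2)` with the constant term removed. -/
noncomputable def diffWeightCoeff (k : ℕ) : ℝ :=
  Ring.choose (1 / 2 : ℝ) (k + 1) * (-1 / 2) ^ (k + 1)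

-- The ratio `5 / 4` evaluates the binomial series at `5 / 8`, inside its radius of convergence.
lemma summable_abs_diffWeightCoeff_mul_pow :
    Summable fun k ↦ |diffWeightCoeff k| * ((3 / 2 + 1) / (1 + 1)) ^ k := by
  have hsum := (hasSum_choose_mul_pow (1 / 2) (t := 5 / 8) (by norm_num [abs_lt])).summable.abs
  refine (((summable_nat_add_iff 1).2 hsum).mul_left (4 / 5)).congr fun k ↦ ?_
  rw [diffWeightCoeff, abs_mul, abs_mul, abs_pow, abs_pow, show |(-1 / 2 : ℝ)| = 1 / 2 by
    norm_num [abs_of_neg], show |(5 / 8 : ℝ)| = 1 / 2 * (5 / 4) by norm_num, mul_pow]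
  norm_num
  ring

lemma hasSum_diffWeightCoeff_mul_rpow {s : ℝ} (hs : s ∈ Icc (0 : ℝ) 1) :
    HasSum (fun k : ℕ ↦ diffWeightCoeff k * s ^ (3 / 2 + k : ℝ)) (diffWeight s) := by
  have hbinom := hasSum_choose_mul_pow (1 / 2) (t := -1 / 2 * s) (by
    rw [abs_lt]; constructor <;> linarith [hs.1, hs.2])
  have htail := ((hasSum_nat_add_iff' 1).2 hbinom).mul_left √s
  rw [Finset.sum_range_one, Ring.choose_zero_right, pow_zero, mul_one, ← Real.sqrt_eq_rpow,
    show 1 + -1 / 2 * s = 1 - s / 2 by ring] at htail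
  refine htail.congr_fun fun k ↦ ?_
  have hpow : s ^ (3 / 2 + k : ℝ) = √s * s ^ (k + 1) := by
    rw [show (3 / 2 + k : ℝ) = 1 / 2 + (k + 1 : ℕ) by push_cast; ring,
      Real.rpow_add_of_nonneg hs.1 (by norm_num) (by positivity), Real.rpow_natCast,
      Real.sqrt_eq_rpow]
  rw [diffWeightCoeff, hpow, mul_pow]
  ring

lemma integral_sqrt_one_sub_sq_zero_one : ∫ u in (0 : ℝ)..1, √(1 - u ^ 2) = π / 4 := by
  have hcont : Continuous fun u : ℝ ↦ √(1 - u ^ 2) := by fun_prop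
  have hsplit := intervalIntegral.integral_add_adjacent_intervals
    (hcont.intervalIntegrable (μ := volume) (-1) 0) (hcont.intervalIntegrable 0 1)
  have heven := intervalIntegral.integral_comp_neg (a := 0) (b := 1) fun u : ℝ ↦ √(1 - u ^ 2)
  simp only [neg_sq, neg_zero] at heven
  rw [integral_sqrt_one_sub_sq, ← heven] at hsplit
  linarith

lemma integral_diffWeight : ∫ s in (0 : ℝ)..1, diffWeight s = π / 4 / √2 - 2 / 3 := by
  have hweight : ∀ s ∈ uIcc (0 : ℝ) 1, diffWeight s = √(1 - (1 - s) ^ 2) / √2 - √s := by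
    intro s hs
    rw [uIcc_of_le zero_le_one] at hs
    rw [diffWeight, mul_sub, mul_one, ← Real.sqrt_mul hs.1, ← Real.sqrt_div' _ zero_le_two]
    ring_nf
  have hsqrt : ∫ s in (0 : ℝ)..1, √s = 2 / 3 := by
    simp only [Real.sqrt_eq_rpow]
    rw [integral_rpow (.inl (by norm_num))]
    norm_num
  have harc : Continuous fun s : ℝ ↦ √(1 - (1 - s) ^ 2) / √2 := by fun_prop
  rw [intervalIntegral.integral_congr hweight, intervalIntegral.integral_sub
    (harc.intervalIntegrable _ _) (continuous_sqrt.intervalIntegrable _ _),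
    intervalIntegral.integral_div,
    intervalIntegral.integral_comp_sub_left (fun u ↦ √(1 - u ^ 2)) 1, sub_self, sub_zero,
    integral_sqrt_one_sub_sq_zero_one, hsqrt]

lemma sqrt_sq_sub_sq_sub_eq_diffWeight {y m : ℝ} (hy : 0 < y) (hmy : m ≤ y) :
    √(y ^ 2 - m ^ 2) - √2 * √y * √(y - m) = √2 * y * diffWeight (1 - m / y) := by
  have hs : 0 ≤ 1 - m / y := sub_nonneg.2 ((div_le_one hy).2 hmy)
  have hM : y ^ 2 - m ^ 2 = 2 * y ^ 2 * ((1 - m / y) * (1 - (1 - m / y) / 2)) := by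
    field_simp
    ring
  have hS : y - m = y * (1 - m / y) := by field_simp
  rw [hM, hS, Real.sqrt_mul (by positivity), Real.sqrt_mul hs, Real.sqrt_mul zero_le_two,
    Real.sqrt_sq hy.le, Real.sqrt_mul hy.le, diffWeight]
  linear_combination -√2 * √(1 - m / y) * Real.mul_self_sqrt hy.le

lemma M_sub_Sx0 {x : ℝ} (hx : 0 < x) :
    M x - Sx0 x =
      √2 * √x * ∑ m ∈ Finset.range (⌊√x⌋₊ + 1), r2 m * diffWeight (1 - m / √x) := by
  have hfourth : x ^ (1 / 4 : ℝ) = √√x := by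
    rw [Real.sqrt_eq_rpow, Real.sqrt_eq_rpow, ← Real.rpow_mul hx.le]
    norm_num
  rw [M, Sx0, hfourth, Finset.mul_sum, Finset.mul_sum, ← Finset.sum_sub_distrib]
  refine Finset.sum_congr rfl fun m hm ↦ ?_
  have hterm := sqrt_sq_sub_sq_sub_eq_diffWeight (sqrt_pos.2 hx)
    (natCast_le_of_mem_range_floor_add_one (sqrt_nonneg x) hm)
  rw [sq_sqrt hx.le] at hterm
  rw [← Real.sqrt_eq_rpow, ← Real.sqrt_eq_rpow]
  linear_combination (r2 m : ℝ) * hterm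

lemma rpow_half_mul_Q {x : ℝ} (hx : 0 < x) :
    x ^ (1 / 2 : ℝ) * Q x = Sx0 x - 2 ^ (3 / 2 : ℝ) * π / 3 * x := by
  rw [Q, ← mul_assoc, ← Real.rpow_add hx]
  norm_num

lemma M_sub_pi_sq_div_four_mul_sub_Q {x : ℝ} (hx : 0 < x) :
    M x - π ^ 2 / 4 * x - x ^ (1 / 2 : ℝ) * Q x =
      √2 * √x * (∑ m ∈ Finset.range (⌊√x⌋₊ + 1), r2 m * diffWeight (1 - m / √x) -
        π * √x * ∫ s in (0)..1, diffWeight s) := by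
  have hpow : (2 : ℝ) ^ (3 / 2 : ℝ) = 2 * √2 := by
    rw [show (3 / 2 : ℝ) = 1 + 1 / 2 by norm_num, Real.rpow_add two_pos, Real.rpow_one,
      Real.sqrt_eq_rpow]
  have hmain : √2 * √x * (π * √x * (π / 4 / √2 - 2 / 3)) =
      √x ^ 2 * π * (π / 4 - √2 * (2 / 3)) := by
    field_simp
  rw [mul_sub, ← M_sub_Sx0 hx, integral_diffWeight, hmain, sq_sqrt hx.le, rpow_half_mul_Q hx, hpow]
  ring

end DiffWeight

/-- There are `C > 0` and `x₀ ≥ 1` such that for all `x ≥ x₀`,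
`|M(x) − (π²/4)·x − x^{1/2}·Q(√x)| ≤ C·x^{1/4}`. -/
theorem M_asymptotic :
    ∃ C : ℝ, 0 < C ∧ ∃ x₀ : ℝ, 1 ≤ x₀ ∧ ∀ x : ℝ, x₀ ≤ x →
      |M x - Real.pi ^ 2 / 4 * x - x ^ ((1 : ℝ) / 2) * Q x| ≤ C * x ^ ((1 : ℝ) / 4) := by
  set K : ℝ := (∑' n : ℤ × ℤ, 1 / ‖(⟨n.1, n.2⟩ : ℂ)‖ ^ 3) *
    ∑' k, |diffWeightCoeff k| * ((3 / 2 + 1) / (1 + 1)) ^ k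
  have : 0 ≤ K := mul_nonneg (tsum_nonneg fun _ ↦ by positivity)
    (tsum_nonneg fun _ ↦ by positivity)
  refine ⟨√2 * K + 1, by positivity, 1, le_rfl, fun x hx ↦ ?_⟩
  have hx₀ : 0 < x := by linarith
  have hsum := abs_sum_mul_comp_one_sub_div_sub_le (by norm_num) zero_le_one (by norm_num)
    (fun _ ↦ abs_rieszMean_r2_sub_le) summable_abs_diffWeightCoeff_mul_pow
    (fun _ ↦ hasSum_diffWeightCoeff_mul_rpow) (sqrt_pos.2 hx₀)
  have hpow : √x * √x ^ (1 - 3 / 2 : ℝ) = x ^ (1 / 4 : ℝ) := by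
    rw [Real.sqrt_eq_rpow, ← Real.rpow_mul hx₀.le, ← Real.rpow_add hx₀]
    norm_num
  calc |M x - π ^ 2 / 4 * x - x ^ (1 / 2 : ℝ) * Q x|
      ≤ √2 * √x * (K * √x ^ (1 - 3 / 2 : ℝ)) := by
        rw [M_sub_pi_sq_div_four_mul_sub_Q hx₀, abs_mul, abs_of_nonneg (by positivity)]
        gcongr
    _ = √2 * K * x ^ (1 / 4 : ℝ) := by rw [← hpow]; ring
    _ ≤ (√2 * K + 1) * x ^ (1 / 4 : ℝ) := by gcongr; linarith
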